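/- arXiv:1305.3733 — 6 statements merged into one kernel-verified Lean document; each statement's English description precedes it below -/
import Mathlib

section
/- Let G ∈ {0,1}^{k×n} be a generator matrix that is injective as a linear map over GF(2), with k ≥ 1. Define η_max as the largest integer η ≥ 0 such that there do NOT exist distinct messages m ≠ m' in {0,1}^k and erasure matrices E₁, E₂ ∈ 2^G of weight at most η with m(G+E₁) = m'(G+E₂) over GF(2). Then η_max = (min over ordered pairs of distinct messages (m,m') of η₀(c,c')) − 1, where c, c' are the ternary codewords of m, m', and η₀(c,c') = w₃ if w₃ > w₇+w₂+w₄; η₀(c,c') = w₇ if w₇ > w₃+w₂+w₄; and η₀(c,c') = ⌈(w₂+w₃+w₄+w₇)/2⌉ otherwise. -/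
/-- The weight of a binary matrix: its number of `1` entries. -/
def wt {k n : ℕ} (E : Matrix (Fin k) (Fin n) (ZMod 2)) : ℕ :=
  (Finset.univ.filter fun p : Fin k × Fin n => E p.1 p.2 = 1).card

/-- `E ∈ 2^G`: the erasure matrix `E` has `1`s only where `G` has `1`s. -/
def IsErasureFor {k n : ℕ} (G E : Matrix (Fin k) (Fin n) (ZMod 2)) : Prop :=
  ∀ i j, E i j = 1 → G i j = 1

/-- `s_j(m) = Σᵢ mᵢ G_{ij}` computed over the integers: the number of rows `i`
with `mᵢ = 1` and `G_{ij} = 1`. -/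
def intSum {k n : ℕ} (G : Matrix (Fin k) (Fin n) (ZMod 2))
    (m : Fin k → ZMod 2) (j : Fin n) : ℕ :=
  (Finset.univ.filter fun i => m i = 1 ∧ G i j = 1).card

/-- Block size `w₂`: coordinates where the ternary codeword of `m` is `1`
and that of `m'` is a soft zero `0̄`. -/
def w2 {k n : ℕ} (G : Matrix (Fin k) (Fin n) (ZMod 2))
    (m m' : Fin k → ZMod 2) : ℕ :=
  (Finset.univ.filter fun j =>
    Odd (intSum G m j) ∧ Even (intSum G m' j) ∧ intSum G m' j ≠ 0).card

/-- Block size `w₃`: coordinates where the ternary codeword of `m` is `1`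
and that of `m'` is a hard zero `0`. -/
def w3 {k n : ℕ} (G : Matrix (Fin k) (Fin n) (ZMod 2))
    (m m' : Fin k → ZMod 2) : ℕ :=
  (Finset.univ.filter fun j => Odd (intSum G m j) ∧ intSum G m' j = 0).card

/-- Block size `w₄`: coordinates where the ternary codeword of `m` is a soft
zero `0̄` and that of `m'` is `1`. -/
def w4 {k n : ℕ} (G : Matrix (Fin k) (Fin n) (ZMod 2))
    (m m' : Fin k → ZMod 2) : ℕ :=
  (Finset.univ.filter fun j =>
    (Even (intSum G m j) ∧ intSum G m j ≠ 0) ∧ Odd (intSum G m' j)).card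

/-- Block size `w₇`: coordinates where the ternary codeword of `m` is a hard
zero `0` and that of `m'` is `1`. -/
def w7 {k n : ℕ} (G : Matrix (Fin k) (Fin n) (ZMod 2))
    (m m' : Fin k → ZMod 2) : ℕ :=
  (Finset.univ.filter fun j => intSum G m j = 0 ∧ Odd (intSum G m' j)).card

/-- The distance `η₀(c,c')` between the ternary codewords of `m` and `m'`:
`w₃` if `w₃ > w₇+w₂+w₄`; `w₇` if `w₇ > w₃+w₂+w₄`;
`⌈(w₂+w₃+w₄+w₇)/2⌉` otherwise. -/
def eta0 {k n : ℕ} (G : Matrix (Fin k) (Fin n) (ZMod 2))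
    (m m' : Fin k → ZMod 2) : ℕ :=
  if w7 G m m' + w2 G m m' + w4 G m m' < w3 G m m' then w3 G m m'
  else if w3 G m m' + w2 G m m' + w4 G m m' < w7 G m m' then w7 G m m'
  else (w2 G m m' + w3 G m m' + w4 G m m' + w7 G m m' + 1) / 2

/-!
Erasing flips the coordinates of `mG` by `mE`, and as `E` ranges over `2^G` with `w(E) ≤ η`, the
support of `mE` ranges over exactly the sets of at most `η` coordinates that are not hard zeros of
`m`. Since `m(G + E₁) = m'(G + E₂)` says `supp (mE₁) ∆ supp (m'E₂) = supp (mG) ∆ supp (m'G) =: D`,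
confusability asks whether `D` is a symmetric difference of two sets of size at most `η` avoiding
the hard zeros of `m` and of `m'` respectively. The `w₃` (resp. `w₇`) coordinates of `D` that are
hard zeros of `m'` (resp. `m`) have to lie in the first (resp. second) set, and the others may go
to either one, so the condition is `w₃ ≤ η`, `w₇ ≤ η` and `|D| ≤ 2η`, that is, `η₀(c, c') ≤ η`.
-/

section ErasureDistance

open Finset
open scoped symmDiff Matrix

lemma isGreatest_sInf_sub_one {S : Set ℕ} (hS : S.Nonempty) (hpos : ∀ v ∈ S, 0 < v) :
    IsGreatest {η | ∀ v ∈ S, η < v} (sInf S - 1) := by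
  have hmem : sInf S ∈ S := Nat.sInf_mem hS
  exact ⟨fun v hv => (Nat.sub_one_lt (hpos _ hmem).ne').trans_le (Nat.sInf_le hv),
    fun η hη => Nat.le_sub_one_of_lt (hη _ hmem)⟩

section SymmDiff

variable {α : Type*} [DecidableEq α] {D P Q : Finset α} {a b : ℕ}

lemma exists_between_card_le_card_sdiff_le (hD : D ⊆ P ∪ Q) (hQ : #(D \ Q) ≤ a) (hP : #(D \ P) ≤ b)
    (hab : #D ≤ a + b) : ∃ A ⊆ D ∩ P, D \ Q ⊆ A ∧ #A ≤ a ∧ #(D \ A) ≤ b := by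
  have hsub : D \ Q ⊆ D ∩ P := by grind
  -- Taking `A` as large as `P` and the bound `a` allow leaves the fewest elements for `D \ A`.
  obtain ⟨A, hQA, hAP, hA⟩ := exists_subsuperset_card_eq hsub
    (le_min hQ (card_le_card hsub)) (min_le_right a #(D ∩ P))
  have hsplit : #(D \ A) + #A = #D :=
    card_sdiff_add_card_eq_card (hAP.trans inter_subset_left)
  have hsplitP := card_sdiff_add_card_inter D P
  exact ⟨A, hAP, hQA, by omega, by omega⟩

lemma exists_symmDiff_eq_and_card_le_iff (hD : D ⊆ P ∪ Q) :
    (∃ A ⊆ P, ∃ B ⊆ Q, #A ≤ a ∧ #B ≤ b ∧ A ∆ B = D) ↔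
      #(D \ Q) ≤ a ∧ #(D \ P) ≤ b ∧ #D ≤ a + b := by
  constructor
  · rintro ⟨A, hA, B, hB, ha, hb, rfl⟩
    have hQ : A ∆ B \ Q ⊆ A := by grind [mem_symmDiff]
    have hP : A ∆ B \ P ⊆ B := by grind [mem_symmDiff]
    refine ⟨(card_le_card hQ).trans ha, (card_le_card hP).trans hb, ?_⟩
    calc #(A ∆ B) ≤ #(A ∪ B) := card_le_card symmDiff_subset_union
      _ ≤ #A + #B := card_union_le A B
      _ ≤ a + b := add_le_add ha hb
  · rintro ⟨hQ, hP, hab⟩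
    obtain ⟨A, hA, hQA, ha, hb⟩ := exists_between_card_le_card_sdiff_le hD hQ hP hab
    exact ⟨A, by grind, D \ A, by grind, ha, hb, by grind [mem_symmDiff]⟩

end SymmDiff

section BinarySupport

variable {ι : Type*} [Fintype ι] {x y u v : ι → ZMod 2}

/-- The support of a binary vector, as a finset. Identifying a vector with its support turns
addition over GF(2) into symmetric difference. -/
def binarySupport (x : ι → ZMod 2) : Finset ι :=
  {j | x j = 1}

lemma mem_binarySupport {j : ι} : j ∈ binarySupport x ↔ x j = 1 :=
  mem_filter_univ j

lemma binarySupport_inj : binarySupport x = binarySupport y ↔ x = y := by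
  have eq_iff : ∀ a b : ZMod 2, (a = 1 ↔ b = 1) ↔ a = b := by decide
  simp only [Finset.ext_iff, mem_binarySupport, eq_iff, funext_iff]

lemma binarySupport_add [DecidableEq ι] :
    binarySupport (x + y) = binarySupport x ∆ binarySupport y := by
  have add_eq_one_iff : ∀ a b : ZMod 2, a + b = 1 ↔ a = 1 ∧ b ≠ 1 ∨ b = 1 ∧ a ≠ 1 := by decide
  ext j
  simp only [mem_symmDiff, mem_binarySupport, Pi.add_apply, add_eq_one_iff, ne_eq]

lemma add_eq_add_iff_binarySupport_symmDiff_eq [DecidableEq ι] :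
    x + u = y + v ↔
      binarySupport u ∆ binarySupport v = binarySupport x ∆ binarySupport y := by
  have add_eq_add_iff : ∀ a b c d : ZMod 2, a + c = b + d ↔ c + d = a + b := by decide
  rw [← binarySupport_add, ← binarySupport_add, binarySupport_inj, funext_iff, funext_iff]
  exact forall_congr' fun j => add_eq_add_iff (x j) (y j) (u j) (v j)

end BinarySupport

variable {k n : ℕ} {G E : Matrix (Fin k) (Fin n) (ZMod 2)} {m m' : Fin k → ZMod 2} {η : ℕ}

section Erasure

/-- The coordinates at which the ternary codeword of `m` is not a hard zero; these are the ones
that an erasure can flip. -/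
def nonHardZeros (G : Matrix (Fin k) (Fin n) (ZMod 2)) (m : Fin k → ZMod 2) : Finset (Fin n) :=
  {j | intSum G m j ≠ 0}

lemma mem_nonHardZeros {j : Fin n} : j ∈ nonHardZeros G m ↔ ∃ i, m i = 1 ∧ G i j = 1 := by
  simp only [nonHardZeros, intSum, mem_filter_univ, card_ne_zero, filter_nonempty_iff, mem_univ,
    true_and]

lemma vecMul_apply_eq_intSum (G : Matrix (Fin k) (Fin n) (ZMod 2)) (m : Fin k → ZMod 2)
    (j : Fin n) : (m ᵥ* G) j = intSum G m j := by
  have mul_eq_ite : ∀ a b : ZMod 2, a * b = if a = 1 ∧ b = 1 then 1 else 0 := by decide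
  simp only [Matrix.vecMul, dotProduct, mul_eq_ite, sum_boole, intSum]

lemma mem_binarySupport_vecMul {j : Fin n} :
    j ∈ binarySupport (m ᵥ* G) ↔ Odd (intSum G m j) := by
  rw [mem_binarySupport, vecMul_apply_eq_intSum, ZMod.natCast_eq_one_iff_odd]

lemma binarySupport_vecMul_subset_nonHardZeros :
    binarySupport (m ᵥ* G) ⊆ nonHardZeros G m := fun _ hj =>
  (mem_filter_univ _).mpr (mem_binarySupport_vecMul.mp hj).pos.ne'

lemma card_nonHardZeros_le_wt (E : Matrix (Fin k) (Fin n) (ZMod 2)) (m : Fin k → ZMod 2) :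
    #(nonHardZeros E m) ≤ wt E := by
  refine card_le_card_of_surjOn Prod.snd fun j hj => ?_
  obtain ⟨i, -, hE⟩ := mem_nonHardZeros.mp hj
  exact ⟨(i, j), by simpa using hE, rfl⟩

lemma IsErasureFor.nonHardZeros_subset (hE : IsErasureFor G E) (m : Fin k → ZMod 2) :
    nonHardZeros E m ⊆ nonHardZeros G m := fun j hj =>
  let ⟨i, hm, hEij⟩ := mem_nonHardZeros.mp hj
  mem_nonHardZeros.mpr ⟨i, hm, hE i j hEij⟩

lemma exists_isErasureFor_binarySupport_vecMul_eq {A : Finset (Fin n)}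
    (hA : A ⊆ nonHardZeros G m) :
    ∃ E, IsErasureFor G E ∧ wt E ≤ #A ∧ binarySupport (m ᵥ* E) = A := by
  choose row hm hG using fun j : A => mem_nonHardZeros.mp (hA j.2)
  obtain ⟨E, hE⟩ : ∃ E : Matrix (Fin k) (Fin n) (ZMod 2),
      ∀ {i j}, E i j = 1 ↔ ∃ hj : j ∈ A, row ⟨j, hj⟩ = i :=
    ⟨Matrix.of fun i j => if ∃ hj : j ∈ A, row ⟨j, hj⟩ = i then 1 else 0, by simp⟩
  have hrows {j} (hj : j ∈ A) :
      ({i | m i = 1 ∧ E i j = 1} : Finset (Fin k)) = {row ⟨j, hj⟩} := by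
    grind
  refine ⟨E, fun i j hij => ?_, ?_, Finset.ext fun j => ?_⟩
  · obtain ⟨hj, rfl⟩ := hE.mp hij
    exact hG ⟨j, hj⟩
  · exact card_le_card_of_injOn Prod.snd (fun p hp => by grind)
      (fun p hp q hq hpq => by grind)
  · rw [mem_binarySupport_vecMul, intSum]
    by_cases hj : j ∈ A
    · simp only [hrows hj, card_singleton, odd_one, hj]
    · simp [hE, hj]

lemma exists_isErasureFor_binarySupport_eq_iff {A : Finset (Fin n)} :
    (∃ E, IsErasureFor G E ∧ wt E ≤ η ∧ binarySupport (m ᵥ* E) = A) ↔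
      A ⊆ nonHardZeros G m ∧ #A ≤ η := by
  constructor
  · rintro ⟨E, hE, hw, rfl⟩
    have hsub : binarySupport (m ᵥ* E) ⊆ nonHardZeros E m :=
      binarySupport_vecMul_subset_nonHardZeros
    exact ⟨hsub.trans (hE.nonHardZeros_subset m),
      (card_le_card hsub).trans ((card_nonHardZeros_le_wt E m).trans hw)⟩
  · rintro ⟨hA, hcard⟩
    obtain ⟨E, hE, hw, hsupp⟩ := exists_isErasureFor_binarySupport_vecMul_eq hA
    exact ⟨E, hE, hw.trans hcard, hsupp⟩

end Erasure

section Distance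

/-- The coordinates at which the binary codewords `mG` and `m'G` differ. -/
def differenceSet (G : Matrix (Fin k) (Fin n) (ZMod 2)) (m m' : Fin k → ZMod 2) :
    Finset (Fin n) :=
  binarySupport (m ᵥ* G) ∆ binarySupport (m' ᵥ* G)

lemma differenceSet_subset_union :
    differenceSet G m m' ⊆ nonHardZeros G m ∪ nonHardZeros G m' :=
  symmDiff_subset_union.trans <| union_subset_union binarySupport_vecMul_subset_nonHardZeros
    binarySupport_vecMul_subset_nonHardZeros

lemma differenceSet_comm (G : Matrix (Fin k) (Fin n) (ZMod 2)) (m m' : Fin k → ZMod 2) :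
    differenceSet G m m' = differenceSet G m' m :=
  symmDiff_comm _ _

lemma differenceSet_eq_empty_iff : differenceSet G m m' = ∅ ↔ m ᵥ* G = m' ᵥ* G :=
  symmDiff_eq_empty.trans binarySupport_inj

lemma w4_eq_w2_swap (G : Matrix (Fin k) (Fin n) (ZMod 2)) (m m' : Fin k → ZMod 2) :
    w4 G m m' = w2 G m' m := by
  simp only [w4, w2, and_comm]

lemma w7_eq_w3_swap (G : Matrix (Fin k) (Fin n) (ZMod 2)) (m m' : Fin k → ZMod 2) :
    w7 G m m' = w3 G m' m := by
  simp only [w7, w3, and_comm]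

lemma card_differenceSet_sdiff_nonHardZeros_right :
    #(differenceSet G m m' \ nonHardZeros G m') = w3 G m m' := by
  rw [w3]
  congr 1
  ext j
  simp only [differenceSet, mem_sdiff, mem_symmDiff, mem_binarySupport_vecMul, nonHardZeros,
    mem_filter_univ, Nat.odd_iff]
  omega

lemma card_differenceSet_sdiff_nonHardZeros_left :
    #(differenceSet G m m' \ nonHardZeros G m) = w7 G m m' := by
  rw [differenceSet_comm, card_differenceSet_sdiff_nonHardZeros_right, w7_eq_w3_swap]

lemma card_binarySupport_sdiff (G : Matrix (Fin k) (Fin n) (ZMod 2)) (m m' : Fin k → ZMod 2) :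
    #(binarySupport (m ᵥ* G) \ binarySupport (m' ᵥ* G)) = w2 G m m' + w3 G m m' := by
  rw [w2, w3, ← card_union_of_disjoint (disjoint_filter.mpr fun _ _ h h' => h.2.2 h'.2)]
  congr 1
  ext j
  simp only [mem_sdiff, mem_union, mem_binarySupport_vecMul, mem_filter_univ, Nat.odd_iff,
    Nat.even_iff]
  omega

lemma card_differenceSet :
    #(differenceSet G m m') = w2 G m m' + w3 G m m' + w4 G m m' + w7 G m m' := by
  rw [differenceSet, Finset.symmDiff_def, card_union_of_disjoint disjoint_sdiff_sdiff,
    card_binarySupport_sdiff, card_binarySupport_sdiff, w4_eq_w2_swap, w7_eq_w3_swap, ← add_assoc]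

lemma eta0_le_iff :
    eta0 G m m' ≤ η ↔
      w3 G m m' ≤ η ∧ w7 G m m' ≤ η ∧ w2 G m m' + w3 G m m' + w4 G m m' + w7 G m m' ≤ 2 * η := by
  rw [eta0]
  split_ifs <;> omega

lemma eta0_pos (h : m ᵥ* G ≠ m' ᵥ* G) : 0 < eta0 G m m' := by
  by_contra! h0
  have hcard : #(differenceSet G m m') ≤ 0 := card_differenceSet.trans_le (eta0_le_iff.mp h0).2.2
  exact h (differenceSet_eq_empty_iff.mp (card_eq_zero.mp (Nat.le_zero.mp hcard)))

end Distance

section Confusable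

/-- The messages `m` and `m'` are `η`-confusable if erasures of weight at most `η` in each
encoding can produce the same word. -/
def Confusable (G : Matrix (Fin k) (Fin n) (ZMod 2)) (η : ℕ) (m m' : Fin k → ZMod 2) : Prop :=
  ∃ E₁ E₂, IsErasureFor G E₁ ∧ wt E₁ ≤ η ∧ IsErasureFor G E₂ ∧ wt E₂ ≤ η ∧
    m ᵥ* (G + E₁) = m' ᵥ* (G + E₂)

lemma confusable_iff_exists_symmDiff_eq :
    Confusable G η m m' ↔
      ∃ A ⊆ nonHardZeros G m, ∃ B ⊆ nonHardZeros G m',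
        #A ≤ η ∧ #B ≤ η ∧ A ∆ B = differenceSet G m m' := by
  simp only [Confusable, Matrix.vecMul_add, add_eq_add_iff_binarySupport_symmDiff_eq]
  constructor
  · rintro ⟨E₁, E₂, hE₁, hw₁, hE₂, hw₂, hD⟩
    obtain ⟨hA, ha⟩ := exists_isErasureFor_binarySupport_eq_iff.mp ⟨E₁, hE₁, hw₁, rfl⟩
    obtain ⟨hB, hb⟩ := exists_isErasureFor_binarySupport_eq_iff.mp ⟨E₂, hE₂, hw₂, rfl⟩
    exact ⟨_, hA, _, hB, ha, hb, hD⟩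
  · rintro ⟨A, hA, B, hB, ha, hb, hD⟩
    obtain ⟨E₁, hE₁, hw₁, rfl⟩ := exists_isErasureFor_binarySupport_eq_iff.mpr ⟨hA, ha⟩
    obtain ⟨E₂, hE₂, hw₂, rfl⟩ := exists_isErasureFor_binarySupport_eq_iff.mpr ⟨hB, hb⟩
    exact ⟨E₁, E₂, hE₁, hw₁, hE₂, hw₂, hD⟩

lemma confusable_iff_eta0_le : Confusable G η m m' ↔ eta0 G m m' ≤ η := by
  rw [confusable_iff_exists_symmDiff_eq,
    exists_symmDiff_eq_and_card_le_iff differenceSet_subset_union,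
    card_differenceSet_sdiff_nonHardZeros_right, card_differenceSet_sdiff_nonHardZeros_left,
    card_differenceSet, eta0_le_iff, two_mul]

end Confusable

end ErasureDistance

/-- For an injective generator matrix `G` with `k ≥ 1`, the
largest `η` such that no distinct messages `m ≠ m'` and erasure matrices
`E₁, E₂ ∈ 2^G` of weight at most `η` satisfy `m(G+E₁) = m'(G+E₂)` equals
`(min over ordered pairs of distinct messages of η₀(c,c')) − 1`. -/
theorem stmt0 (k n : ℕ) (hk : 1 ≤ k) (G : Matrix (Fin k) (Fin n) (ZMod 2))
    (hinj : Function.Injective fun m : Fin k → ZMod 2 => Matrix.vecMul m G) :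
    IsGreatest
      {η : ℕ | ¬ ∃ (m m' : Fin k → ZMod 2) (E₁ E₂ : Matrix (Fin k) (Fin n) (ZMod 2)),
          m ≠ m' ∧
          IsErasureFor G E₁ ∧ wt E₁ ≤ η ∧
          IsErasureFor G E₂ ∧ wt E₂ ≤ η ∧
          Matrix.vecMul m (G + E₁) = Matrix.vecMul m' (G + E₂)}
      (sInf {v : ℕ | ∃ m m' : Fin k → ZMod 2, m ≠ m' ∧ v = eta0 G m m'} - 1) := by
  set S := {v : ℕ | ∃ m m' : Fin k → ZMod 2, m ≠ m' ∧ v = eta0 G m m'}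
  have hS : S.Nonempty := ⟨_, 0, 1, fun h => zero_ne_one (congrFun h ⟨0, hk⟩), rfl⟩
  have hpos : ∀ v ∈ S, 0 < v := by
    rintro _ ⟨m, m', hne, rfl⟩
    exact eta0_pos (hinj.ne hne)
  convert isGreatest_sInf_sub_one hS hpos using 1
  ext η
  calc _ ↔ ¬ ∃ m m' : Fin k → ZMod 2, m ≠ m' ∧ Confusable G η m m' := by
        simp only [Set.mem_ofPred_eq, Confusable, exists_and_left]
    _ ↔ ∀ m m' : Fin k → ZMod 2, m ≠ m' → η < eta0 G m m' := by
        simp only [confusable_iff_eta0_le, not_exists, not_and, not_le]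
    _ ↔ ∀ v ∈ S, η < v :=
        ⟨fun h _ ⟨m, m', hne, hv⟩ => hv ▸ h m m' hne, fun h m m' hne => h _ ⟨m, m', hne, rfl⟩⟩
end

section
/- Let G ∈ {0,1}^{k×n} be a generator matrix that is injective as a linear map over GF(2), and let η ≥ 1 be an integer. Then the following are equivalent: (i) perfect decoding with at most η erasures holds, i.e., there are no distinct messages m ≠ m' in {0,1}^k and erasure matrices E₁, E₂ ∈ 2^G_η (not necessarily distinct) with m(G+E₁) = m'(G+E₂) over GF(2); (ii) no codebook ambiguity occurs at level η, i.e., there are no DISTINCT erasure matrices E₁ ≠ E₂ in 2^G_η and distinct messages m ≠ m' with m(G+E₁) = m'(G+E₂) over GF(2). Consequently, the maximum number of erasures allowing perfect decoding equals the largest integer η with no codebook ambiguity at level η. -/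
/-- Perfect decoding with at most `η` erasures: no distinct messages
`m ≠ m'` and erasure matrices `E₁, E₂ ∈ 2^G_η` (not necessarily distinct)
satisfy `m(G+E₁) = m'(G+E₂)`. -/
def PerfectDecoding {k n : ℕ} (G : Matrix (Fin k) (Fin n) (ZMod 2)) (η : ℕ) : Prop :=
  ¬ ∃ (m m' : Fin k → ZMod 2) (E₁ E₂ : Matrix (Fin k) (Fin n) (ZMod 2)),
      m ≠ m' ∧
      IsErasureFor G E₁ ∧ wt E₁ ≤ η ∧
      IsErasureFor G E₂ ∧ wt E₂ ≤ η ∧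
      Matrix.vecMul m (G + E₁) = Matrix.vecMul m' (G + E₂)

/-- No codebook ambiguity at level `η`: no *distinct* erasure matrices
`E₁ ≠ E₂` in `2^G_η` and distinct messages `m ≠ m'` satisfy
`m(G+E₁) = m'(G+E₂)`. -/
def NoAmbiguity {k n : ℕ} (G : Matrix (Fin k) (Fin n) (ZMod 2)) (η : ℕ) : Prop :=
  ¬ ∃ (m m' : Fin k → ZMod 2) (E₁ E₂ : Matrix (Fin k) (Fin n) (ZMod 2)),
      m ≠ m' ∧ E₁ ≠ E₂ ∧
      IsErasureFor G E₁ ∧ wt E₁ ≤ η ∧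
      IsErasureFor G E₂ ∧ wt E₂ ≤ η ∧
      Matrix.vecMul m (G + E₁) = Matrix.vecMul m' (G + E₂)

/-! The only collisions that perfect decoding forbids and absence of ambiguity does not are those
under a common erasure matrix `E`. The difference `d = m - m'` of two such messages satisfies
`d (G + E) = 0 = 0 (G + 0)`, a collision under `E` and the zero matrix. For `E ≠ 0` this is an
ambiguity, while for `E = 0` it says that `d` is in the kernel of `G`. -/

section

variable {k n : ℕ} {G E : Matrix (Fin k) (Fin n) (ZMod 2)} {η : ℕ}

theorem wt_zero : wt (0 : Matrix (Fin k) (Fin n) (ZMod 2)) = 0 := by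
  simp [wt]

theorem IsErasureFor.zero : IsErasureFor G 0 := by
  simp [IsErasureFor]

theorem PerfectDecoding.injective_vecMul_add (h : PerfectDecoding G η) (hE : IsErasureFor G E)
    (hwt : wt E ≤ η) : Function.Injective fun m => Matrix.vecMul m (G + E) := by
  intro m m' heq
  by_contra hne
  exact h ⟨m, m', E, E, hne, hE, hwt, hE, hwt, heq⟩

theorem PerfectDecoding.noAmbiguity (h : PerfectDecoding G η) : NoAmbiguity G η := by
  rintro ⟨m, m', E₁, E₂, hne, -, hcollision⟩
  exact h ⟨m, m', E₁, E₂, hne, hcollision⟩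

theorem NoAmbiguity.injective_vecMul_add (h : NoAmbiguity G η)
    (hinj : Function.Injective fun m => Matrix.vecMul m G) (hE : IsErasureFor G E)
    (hwt : wt E ≤ η) : Function.Injective fun m => Matrix.vecMul m (G + E) := by
  obtain rfl | hE0 := eq_or_ne E 0
  · simpa only [add_zero] using hinj
  · intro m m' heq
    by_contra hne
    have hcollision : Matrix.vecMul (m - m') (G + E) = Matrix.vecMul 0 (G + 0) := by
      rw [Matrix.sub_vecMul, Matrix.zero_vecMul, sub_eq_zero]
      exact heq
    exact h ⟨m - m', 0, E, 0, sub_ne_zero.mpr hne, hE0, hE, hwt, .zero,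
      wt_zero.trans_le η.zero_le, hcollision⟩

end

theorem stmt1_general (k n : ℕ) (G : Matrix (Fin k) (Fin n) (ZMod 2)) (η : ℕ) :
    PerfectDecoding G η ↔
      (Function.Injective fun m : Fin k → ZMod 2 => Matrix.vecMul m G) ∧ NoAmbiguity G η := by
  constructor
  · intro h
    have hinj := h.injective_vecMul_add .zero (wt_zero.trans_le η.zero_le)
    exact ⟨by simpa only [add_zero] using hinj, h.noAmbiguity⟩
  · rintro ⟨hinj, h⟩ ⟨m, m', E₁, E₂, hne, hE₁, hwt₁, hE₂, hwt₂, heq⟩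
    obtain rfl | hE := eq_or_ne E₁ E₂
    · exact hne (h.injective_vecMul_add hinj hE₁ hwt₁ heq)
    · exact h ⟨m, m', E₁, E₂, hne, hE, hE₁, hwt₁, hE₂, hwt₂, heq⟩

/-- For an injective generator matrix `G` and any `η ≥ 1`,
perfect decoding with at most `η` erasures is equivalent to the absence of
codebook ambiguity at level `η`. Consequently, the maximum number of erasures
allowing perfect decoding equals the largest `η` with no codebook ambiguity. -/
theorem stmt1 (k n : ℕ) (G : Matrix (Fin k) (Fin n) (ZMod 2))
    (hinj : Function.Injective fun m : Fin k → ZMod 2 => Matrix.vecMul m G) :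
    (∀ η : ℕ, 1 ≤ η → (PerfectDecoding G η ↔ NoAmbiguity G η)) ∧
    (∀ M : ℕ, IsGreatest {η : ℕ | PerfectDecoding G η} M ↔
        IsGreatest {η : ℕ | NoAmbiguity G η} M) := by
  have hiff (η : ℕ) : PerfectDecoding G η ↔ NoAmbiguity G η := by
    rw [stmt1_general, and_iff_right hinj]
  exact ⟨fun η _ => hiff η, fun M => by simp only [hiff]⟩
end

section
/- Let c, c' ∈ {0, 0̄, 1}^n be two ternary codewords with block sizes w₁,…,w₉. For a set S of coordinates j with c_j ∈ {1, 0̄}, let r(S) ∈ {0,1}^n be obtained from the binary value of c (where both 0 and 0̄ read as bit 0) by flipping exactly the coordinates in S; note δ(c→r(S)) = |S|. Define η₀(c⇝c'), the minimum number of bit errors needed to mistake c for c', as the minimum of |S| over all such S with δ(c'→r(S)) ≤ δ(c→r(S)) (and η₀ = ∞ if no such S exists). Then η₀(c⇝c') = ∞ if w₇ > w₃+w₂+w₄; η₀(c⇝c') = w₃ if w₃ > w₇+w₂+w₄; and η₀(c⇝c') = ⌈(w₂+w₃+w₄+w₇)/2⌉ otherwise. -/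
/-- A ternary codeword symbol: a one, a soft zero `0̄`, or a hard zero `0`. -/
inductive Tern : Type
  | one : Tern
  | soft : Tern
  | hard : Tern
  deriving DecidableEq

/-- The binary value of a ternary symbol (both soft and hard zeros read as
the bit `false`). -/
def Tern.bit : Tern → Bool
  | .one => true
  | _ => false

/-- The MD distance `δ(c_j → r_j)` on the symbol level:
`δ(0→0)=δ(0̄→0)=δ(1→1)=0`, `δ(1→0)=δ(0̄→1)=1`, `δ(0→1)=∞`. -/
def dSym : Tern → Bool → ℕ∞
  | .hard, true => ⊤
  | .one, false => 1
  | .soft, true => 1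
  | _, _ => 0

/-- The MD distance `δ(c → r) = Σⱼ δ(c_j → r_j)`. -/
def dWord {n : ℕ} (c : Fin n → Tern) (r : Fin n → Bool) : ℕ∞ :=
  ∑ j, dSym (c j) (r j)

/-- The word obtained from the binary value of `c` by flipping exactly the
coordinates in `S`. -/
def flipWord {n : ℕ} (c : Fin n → Tern) (S : Finset (Fin n)) : Fin n → Bool :=
  fun j => if j ∈ S then !(c j).bit else (c j).bit

/-- The block size `w_i(c,c')`: the number of coordinates `j` with
`(c_j, c'_j) = (a, b)`. -/
def blk {n : ℕ} (c c' : Fin n → Tern) (a b : Tern) : ℕ :=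
  (Finset.univ.filter fun j => c j = a ∧ c' j = b).card

/-!
Where no hard zero of `c` is received as a one, `δ(c → r)` is the Hamming distance from the binary
value of `c` to `r`; otherwise it is infinite. Let `D` be the set of coordinates at which the binary
values of `c` and `c'` differ, so that `|D| = w₂ + w₃ + w₄ + w₇`. The binary value of `c'` differs
from `r(S)` exactly on `D ∆ S`, and `|D ∆ S| ≤ |S|` means `|D| ≤ 2 |D ∩ S|`: at least half of `D`
must be flipped. Finiteness of `δ(c' → r(S))` forces all `w₃` coordinates of type `(1, 0)` to be
flipped, while the `w₇` coordinates of type `(0, 1)` may not be, and conversely every subset of `D`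
that respects these constraints and contains at least half of `D` is admissible. Hence an `S` exists
iff `2 w₇ ≤ |D|`, and the least size is then `max w₃ ⌈|D| / 2⌉`.
-/

section Confusion

open Finset

lemma card_symmDiff_le_card_right_iff {α : Type*} [DecidableEq α] (D S : Finset α) :
    #(symmDiff D S) ≤ #S ↔ #D ≤ 2 * #(D ∩ S) := by
  have hcard : #(symmDiff D S) = #(D \ S) + #(S \ D) :=
    card_union_of_disjoint disjoint_sdiff_sdiff
  have hD : #(D \ S) + #(D ∩ S) = #D := card_sdiff_add_card_inter D S
  have hS : #(S \ D) + #(D ∩ S) = #S := inter_comm S D ▸ card_sdiff_add_card_inter S D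
  lia

lemma dSym_ne_top_iff {a : Tern} {b : Bool} : dSym a b ≠ ⊤ ↔ (a = .hard → b = false) := by
  cases a <;> cases b <;> simp [dSym]

lemma dSym_eq_ite {a : Tern} {b : Bool} (h : a = .hard → b = false) :
    dSym a b = if a.bit ≠ b then 1 else 0 := by
  cases a <;> cases b <;> simp_all [dSym, Tern.bit]

variable {n : ℕ}

/-- The binary value of a ternary codeword. -/
def binaryValue (c : Fin n → Tern) : Fin n → Bool := fun j => (c j).bit

/-- A received word `r` is compatible with `c` if no hard zero of `c` is received as a one. -/
def IsCompatible (c : Fin n → Tern) (r : Fin n → Bool) : Prop :=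
  ∀ j, c j = .hard → r j = false

/-- The coordinates at which the binary values of `c` and `c'` differ. -/
def disagreement (c c' : Fin n → Tern) : Finset (Fin n) := {j | (c j).bit ≠ (c' j).bit}

/-- The coordinates `j` with `(c j, c' j) = (a, b)`, counted by `blk c c' a b`. -/
def block (c c' : Fin n → Tern) (a b : Tern) : Finset (Fin n) := {j | c j = a ∧ c' j = b}

variable {c c' : Fin n → Tern} {r : Fin n → Bool} {S : Finset (Fin n)} {j : Fin n}

lemma dWord_ne_top_iff : dWord c r ≠ ⊤ ↔ IsCompatible c r := by
  simp only [dWord, ENat.sum_ne_top, mem_univ, true_imp_iff, dSym_ne_top_iff, IsCompatible]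

lemma IsCompatible.dWord_eq_hammingDist (h : IsCompatible c r) :
    dWord c r = hammingDist (binaryValue c) r := by
  rw [hammingDist, natCast_card_filter]
  exact sum_congr rfl fun j _ => dSym_eq_ite (h j)

lemma isCompatible_flipWord_self : IsCompatible c (flipWord c S) ↔ ∀ j ∈ S, c j ≠ .hard := by
  refine forall_congr' fun j => ?_
  by_cases hj : j ∈ S <;> cases hc : c j <;> simp [flipWord, Tern.bit, hj, hc]

lemma hammingDist_binaryValue_flipWord (c c' : Fin n → Tern) (S : Finset (Fin n)) :
    hammingDist (binaryValue c') (flipWord c S) = #(symmDiff (disagreement c c') S) := by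
  refine congrArg card (ext fun j => ?_)
  by_cases hj : j ∈ S <;>
    simp [hj, mem_symmDiff, binaryValue, flipWord, disagreement, eq_comm]

lemma disagreement_self (c : Fin n → Tern) : disagreement c c = ∅ := by simp [disagreement]

lemma mem_disagreement : j ∈ disagreement c c' ↔ (c j).bit ≠ (c' j).bit := by simp [disagreement]

lemma mem_block {a b : Tern} : j ∈ block c c' a b ↔ c j = a ∧ c' j = b := by simp [block]

lemma card_block (c c' : Fin n → Tern) (a b : Tern) : #(block c c' a b) = blk c c' a b := rfl

lemma card_disagreement (c c' : Fin n → Tern) :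
    #(disagreement c c') =
      blk c c' .one .soft + blk c c' .one .hard + blk c c' .soft .one + blk c c' .hard .one := by
  simp only [disagreement, blk, card_filter, ← sum_add_distrib]
  refine sum_congr rfl fun j _ => ?_
  cases c j <;> cases c' j <;> rfl

lemma block_subset_disagreement {a b : Tern} (hab : a.bit ≠ b.bit) :
    block c c' a b ⊆ disagreement c c' := by
  intro j hj
  obtain ⟨rfl, rfl⟩ := mem_block.mp hj
  exact mem_disagreement.mpr hab

lemma block_one_hard_subset_disagreement_sdiff :
    block c c' .one .hard ⊆ disagreement c c' \ block c c' .hard .one := by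
  refine subset_sdiff.mpr ⟨block_subset_disagreement (by decide), disjoint_left.mpr ?_⟩
  intro j hj hj'
  simp_all [mem_block]

lemma card_disagreement_sdiff_block :
    #(disagreement c c' \ block c c' .hard .one) + blk c c' .hard .one = #(disagreement c c') := by
  rw [← card_block, card_sdiff_add_card_eq_card (block_subset_disagreement (by decide))]

/-- `S` is a set of bit errors after which a minimum distance decoder may mistake `c` for `c'`. -/
def IsConfusing (c c' : Fin n → Tern) (S : Finset (Fin n)) : Prop :=
  (∀ j ∈ S, c j ≠ .hard) ∧ dWord c' (flipWord c S) ≤ dWord c (flipWord c S)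

/-- The minimum number `η₀(c⇝c')` of bit errors needed to mistake `c` for `c'`, which is `⊤` if
no error set is confusing. -/
noncomputable def minErrors (c c' : Fin n → Tern) : ℕ∞ :=
  sInf {v | ∃ S, IsConfusing c c' S ∧ v = #S}

lemma dWord_flipWord_self (hS : ∀ j ∈ S, c j ≠ .hard) : dWord c (flipWord c S) = #S := by
  rw [(isCompatible_flipWord_self.mpr hS).dWord_eq_hammingDist, hammingDist_binaryValue_flipWord,
    disagreement_self, ← bot_eq_empty, bot_symmDiff]

lemma isConfusing_iff :
    IsConfusing c c' S ↔ (∀ j ∈ S, c j ≠ .hard) ∧ IsCompatible c' (flipWord c S) ∧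
      #(disagreement c c') ≤ 2 * #(disagreement c c' ∩ S) := by
  refine and_congr_right fun hS => ?_
  rw [dWord_flipWord_self hS]
  have dWord_le_iff (h : IsCompatible c' (flipWord c S)) :
      dWord c' (flipWord c S) ≤ #S ↔ #(disagreement c c') ≤ 2 * #(disagreement c c' ∩ S) := by
    rw [h.dWord_eq_hammingDist, hammingDist_binaryValue_flipWord, Nat.cast_le,
      card_symmDiff_le_card_right_iff]
  constructor
  · intro hle
    have hcompat := dWord_ne_top_iff.mp (ne_top_of_le_ne_top (ENat.natCast_ne_top _) hle)
    exact ⟨hcompat, (dWord_le_iff hcompat).mp hle⟩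
  · rintro ⟨hcompat, hhalf⟩
    exact (dWord_le_iff hcompat).mpr hhalf

lemma IsConfusing.card_disagreement_le (h : IsConfusing c c' S) :
    #(disagreement c c') ≤ 2 * #(disagreement c c' ∩ S) :=
  (isConfusing_iff.mp h).2.2

lemma IsConfusing.block_one_hard_subset (h : IsConfusing c c' S) : block c c' .one .hard ⊆ S := by
  intro j hj
  obtain ⟨hone, hhard⟩ := mem_block.mp hj
  have hflip : flipWord c S j = false := (isConfusing_iff.mp h).2.1 j hhard
  by_contra hjS
  simp [flipWord, hjS, hone, Tern.bit] at hflip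

lemma IsConfusing.inter_subset_sdiff (h : IsConfusing c c' S) :
    disagreement c c' ∩ S ⊆ disagreement c c' \ block c c' .hard .one := by
  intro j hj
  obtain ⟨hjD, hjS⟩ := mem_inter.mp hj
  exact mem_sdiff.mpr ⟨hjD, fun hblock => h.1 j hjS (mem_block.mp hblock).1⟩

lemma isConfusing_of_subset_of_subset (hsub : block c c' .one .hard ⊆ S)
    (hsup : S ⊆ disagreement c c' \ block c c' .hard .one) (hhalf : #(disagreement c c') ≤ 2 * #S) :
    IsConfusing c c' S := by
  have hSD : S ⊆ disagreement c c' := hsup.trans sdiff_subset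
  refine isConfusing_iff.mpr ⟨fun j hj hc => ?_, fun j hc' => ?_, ?_⟩
  · obtain ⟨hjD, hblock⟩ := mem_sdiff.mp (hsup hj)
    cases hc' : c' j <;> simp [mem_disagreement, mem_block, hc, hc', Tern.bit] at hjD hblock
  · by_cases hj : j ∈ S
    · have hbit := mem_disagreement.mp (hSD hj)
      simpa [flipWord, hj, hc', Tern.bit] using hbit
    · have hone : c j ≠ .one := fun hc => hj (hsub (mem_block.mpr ⟨hc, hc'⟩))
      cases hc : c j <;> simp_all [flipWord, Tern.bit]
  · rwa [inter_eq_right.mpr hSD]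

lemma exists_isConfusing_card_eq {m : ℕ} (hone : blk c c' .one .hard ≤ m)
    (hhard : m + blk c c' .hard .one ≤ #(disagreement c c'))
    (hhalf : #(disagreement c c') ≤ 2 * m) : ∃ S, IsConfusing c c' S ∧ #S = m := by
  rw [← card_block] at hone
  have hm : m ≤ #(disagreement c c' \ block c c' .hard .one) := by
    have := card_disagreement_sdiff_block (c := c) (c' := c')
    lia
  obtain ⟨S, hsub, hsup, rfl⟩ :=
    exists_subsuperset_card_eq block_one_hard_subset_disagreement_sdiff hone hm
  exact ⟨S, isConfusing_of_subset_of_subset hsub hsup hhalf, rfl⟩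

theorem minErrors_eq_top (h : #(disagreement c c') < 2 * blk c c' .hard .one) :
    minErrors c c' = ⊤ := by
  refine sInf_eq_top.mpr ?_
  rintro _ ⟨S, hS, -⟩
  have hhalf := hS.card_disagreement_le
  have hinter := card_le_card hS.inter_subset_sdiff
  have hsdiff := card_disagreement_sdiff_block (c := c) (c' := c')
  lia

theorem minErrors_eq_max (h : 2 * blk c c' .hard .one ≤ #(disagreement c c')) :
    minErrors c c' = (max (blk c c' .one .hard) ((#(disagreement c c') + 1) / 2) : ℕ) := by
  apply le_antisymm
  · have hblocks : blk c c' .one .hard + blk c c' .hard .one ≤ #(disagreement c c') := by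
      rw [card_disagreement]
      lia
    obtain ⟨S, hS, hcard⟩ := exists_isConfusing_card_eq (c := c) (c' := c')
      (le_max_left _ ((#(disagreement c c') + 1) / 2)) (by lia) (by lia)
    exact sInf_le ⟨S, hS, congrArg Nat.cast hcard.symm⟩
  · refine le_sInf ?_
    rintro _ ⟨S, hS, rfl⟩
    have hone : blk c c' .one .hard ≤ #S :=
      card_block c c' .one .hard ▸ card_le_card hS.block_one_hard_subset
    have hhalf := hS.card_disagreement_le
    have hinter : #(disagreement c c' ∩ S) ≤ #S := card_le_card inter_subset_right
    exact Nat.cast_le.mpr (by lia)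

end Confusion

/-- For ternary codewords `c, c'` with block sizes `w₁,…,w₉`,
the minimum number `η₀(c⇝c')` of bit errors needed to mistake `c` for `c'` —
i.e. the minimum of `|S|` over sets `S` of coordinates `j` with `c_j ∈ {1,0̄}`
such that `δ(c'→r(S)) ≤ δ(c→r(S))`, and `∞` if no such `S` exists — equals
`∞` if `w₇ > w₃+w₂+w₄`, `w₃` if `w₃ > w₇+w₂+w₄`, and
`⌈(w₂+w₃+w₄+w₇)/2⌉` otherwise. -/
theorem stmt3 (n : ℕ) (c c' : Fin n → Tern) :
    sInf {v : ℕ∞ | ∃ S : Finset (Fin n),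
        (∀ j ∈ S, c j ≠ Tern.hard) ∧
        dWord c' (flipWord c S) ≤ dWord c (flipWord c S) ∧
        v = (S.card : ℕ∞)} =
      (if blk c c' Tern.one Tern.soft + blk c c' Tern.one Tern.hard +
            blk c c' Tern.soft Tern.one < blk c c' Tern.hard Tern.one then ⊤
       else if blk c c' Tern.hard Tern.one + blk c c' Tern.one Tern.soft +
            blk c c' Tern.soft Tern.one < blk c c' Tern.one Tern.hard then
         (blk c c' Tern.one Tern.hard : ℕ∞)
       else (((blk c c' Tern.one Tern.soft + blk c c' Tern.one Tern.hard +
            blk c c' Tern.soft Tern.one + blk c c' Tern.hard Tern.one + 1) / 2 : ℕ) : ℕ∞)) := by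
  have hη : sInf {v : ℕ∞ | ∃ S : Finset (Fin n), (∀ j ∈ S, c j ≠ Tern.hard) ∧
      dWord c' (flipWord c S) ≤ dWord c (flipWord c S) ∧ v = (S.card : ℕ∞)} =
      minErrors c c' := by
    simp only [minErrors, IsConfusing, and_assoc]
  have hD := card_disagreement c c'
  rw [hη]
  split_ifs with htop hmany
  · exact minErrors_eq_top (by lia)
  · rw [minErrors_eq_max (by lia), max_eq_left (by lia)]
  · rw [minErrors_eq_max (by lia), max_eq_right (by lia), hD]
end

section
/- For all integers m ≥ 2 and k with 1 ≤ k ≤ m−1, the binomial coefficient satisfies C(m,k) ≤ (e/(π·√2)) · m^m / (k^k · (m−k)^{m−k}). -/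
/-!
The ratio of `n!` to `√(2n) (n/e)ⁿ` decreases from `e/√2` at `n = 1` to its limit `√π`. Bounding
`(k + l)!` by the first term and `k!`, `l!` by the limit gives `(k + l).choose k` up to the factor
`e/(2π) · √(1/k + 1/l)`, which is largest at `k = l = 1`, where it equals `e/(π√2)`.
-/

section

open scoped Nat Real

theorem stirlingSeq_le_exp_one_div_sqrt_two (n : ℕ) :
    Stirling.stirlingSeq n ≤ Real.exp 1 / √2 := by
  cases n with
  | zero =>
    rw [Stirling.stirlingSeq_zero]
    positivity
  | succ j => simpa using Stirling.stirlingSeq'_antitone (Nat.zero_le j)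

theorem factorial_le_exp_one_mul_sqrt_mul_pow {n : ℕ} (hn : n ≠ 0) :
    (n ! : ℝ) ≤ Real.exp 1 * √n * (n / Real.exp 1) ^ n := by
  have hseq : (n ! : ℝ) / (√(2 * n) * (n / Real.exp 1) ^ n) ≤ Real.exp 1 / √2 :=
    stirlingSeq_le_exp_one_div_sqrt_two n
  calc (n ! : ℝ) ≤ Real.exp 1 / √2 * (√(2 * n) * (n / Real.exp 1) ^ n) :=
        (div_le_iff₀ (by positivity)).mp hseq
    _ = Real.exp 1 * √n * (n / Real.exp 1) ^ n := by
        rw [Real.sqrt_mul zero_le_two]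
        field_simp

theorem sqrt_inv_add_inv {x y : ℝ} (hx : 0 < x) (hy : 0 < y) :
    √(x⁻¹ + y⁻¹) = √(x + y) / (√x * √y) := by
  rw [inv_add_inv hx.ne' hy.ne', Real.sqrt_div (by positivity), Real.sqrt_mul hx.le]

theorem add_choose_le_mul_sqrt_inv_add_inv {k l : ℕ} (hk : k ≠ 0) (hl : l ≠ 0) :
    ((k + l).choose k : ℝ) ≤
      Real.exp 1 / (2 * π) * √((k : ℝ)⁻¹ + (l : ℝ)⁻¹) *
        ((k + l : ℝ) ^ (k + l) / ((k : ℝ) ^ k * (l : ℝ) ^ l)) := by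
  have hk_pos : (0 : ℝ) < k := by positivity
  have hl_pos : (0 : ℝ) < l := by positivity
  have hnum : ((k + l)! : ℝ) ≤
      Real.exp 1 * √(k + l) * ((k + l) / Real.exp 1) ^ (k + l) := by
    exact_mod_cast factorial_le_exp_one_mul_sqrt_mul_pow (n := k + l) (by lia)
  calc ((k + l).choose k : ℝ) = (k + l)! / (k ! * l !) := Nat.cast_add_choose ℝ
    _ ≤ Real.exp 1 * √(k + l) * ((k + l) / Real.exp 1) ^ (k + l) /
          ((√(2 * π * k) * (k / Real.exp 1) ^ k) * (√(2 * π * l) * (l / Real.exp 1) ^ l)) := by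
        gcongr <;> exact Stirling.le_factorial_stirling _
    _ = Real.exp 1 / √(2 * π) ^ 2 * (√(k + l) / (√k * √l)) *
          ((k + l : ℝ) ^ (k + l) / ((k : ℝ) ^ k * (l : ℝ) ^ l)) := by
        rw [Real.sqrt_mul (by positivity) (k : ℝ), Real.sqrt_mul (by positivity) (l : ℝ)]
        simp only [div_pow, pow_add (Real.exp 1)]
        field_simp
    _ = _ := by rw [Real.sq_sqrt (by positivity), sqrt_inv_add_inv hk_pos hl_pos]

theorem add_choose_le_exp_one_div_mul {k l : ℕ} (hk : k ≠ 0) (hl : l ≠ 0) :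
    ((k + l).choose k : ℝ) ≤
      Real.exp 1 / (π * √2) * ((k + l : ℝ) ^ (k + l) / ((k : ℝ) ^ k * (l : ℝ) ^ l)) := by
  have hinv : (k : ℝ)⁻¹ + (l : ℝ)⁻¹ ≤ 2 := by
    linarith [Nat.cast_inv_le_one (α := ℝ) k, Nat.cast_inv_le_one (α := ℝ) l]
  have hconst : Real.exp 1 / (2 * π) * √2 = Real.exp 1 / (π * √2) := by
    field_simp
    exact Real.sq_sqrt zero_le_two
  calc ((k + l).choose k : ℝ) ≤ _ := add_choose_le_mul_sqrt_inv_add_inv hk hl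
    _ ≤ Real.exp 1 / (2 * π) * √2 *
          ((k + l : ℝ) ^ (k + l) / ((k : ℝ) ^ k * (l : ℝ) ^ l)) := by gcongr
    _ = _ := by rw [hconst]

end

/-- For integers `m ≥ 2` and `1 ≤ k ≤ m−1`,
`C(m,k) ≤ (e/(π√2)) · m^m / (k^k · (m−k)^{m−k})`. -/
theorem stmt8 (m k : ℕ) (hm : 2 ≤ m) (hk1 : 1 ≤ k) (hk2 : k ≤ m - 1) :
    (m.choose k : ℝ) ≤
      Real.exp 1 / (Real.pi * Real.sqrt 2) *
        ((m : ℝ) ^ m / ((k : ℝ) ^ k * ((m : ℝ) - (k : ℝ)) ^ (m - k))) := by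
  obtain ⟨l, rfl⟩ := Nat.exists_eq_add_of_le (show k ≤ m by lia)
  rw [Nat.cast_add, add_sub_cancel_left, Nat.add_sub_cancel_left]
  exact add_choose_le_exp_one_div_mul (by lia) (by lia)
end

section
/- Let a, b > 0 and s > 0 be real numbers, and define ψ(x) = x^x for x > 0 with ψ(0) = 1. Then the supremum over t ∈ [0, s] of a^t · b^{s−t} · ψ(s)/(ψ(t)·ψ(s−t)) equals (a+b)^s, and this supremum is attained at t* = a·s/(a+b). -/
/-! By weighted AM-GM with weights `t i` and values `a i / t i`,
`∏ (a i / t i) ^ t i ≤ ((∑ a i) / s) ^ s` whenever `∑ t i = s`, with equality when `t` is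
proportional to `a`. The theorem is the case of two indices, with weights `t` and `s - t`. -/

open Finset

section MultinomialTerm

variable {ι : Type*} {S : Finset ι} {a t : ι → ℝ}

/-- The multinomial term `(∑ t)! / ∏ (t i)! * ∏ a i ^ t i` with real exponents and every factorial
`n!` replaced by `ψ n = n ^ n`; for two indices it is the quantity maximised in `stmt10`. -/
noncomputable def multinomialTerm (S : Finset ι) (a t : ι → ℝ) : ℝ :=
  (∏ i ∈ S, a i ^ t i) * (∑ i ∈ S, t i) ^ (∑ i ∈ S, t i) / ∏ i ∈ S, t i ^ t i

lemma rpow_self_pos {x : ℝ} (hx : 0 ≤ x) : 0 < x ^ x := by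
  rcases hx.eq_or_lt with rfl | hx
  · simp
  · exact Real.rpow_pos_of_pos hx x

-- The junk value at `t i = 0` is harmless: such an index contributes `(a i / 0) ^ 0 = 1`.
lemma prod_div_rpow_le_sum_div_sum_rpow (ha : ∀ i ∈ S, 0 ≤ a i) (ht : ∀ i ∈ S, 0 ≤ t i) :
    ∏ i ∈ S, (a i / t i) ^ t i ≤ ((∑ i ∈ S, a i) / ∑ i ∈ S, t i) ^ ∑ i ∈ S, t i := by
  have hquot (i) (hi : i ∈ S) : 0 ≤ a i / t i := div_nonneg (ha i hi) (ht i hi)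
  rcases (sum_nonneg ht).eq_or_lt with hzero | hpos
  · have ht0 : ∀ i ∈ S, t i = 0 := (sum_eq_zero_iff_of_nonneg ht).1 hzero.symm
    rw [← hzero, Real.rpow_zero, prod_congr rfl fun i hi => by rw [ht0 i hi, Real.rpow_zero],
      prod_const_one]
  · have hcancel (i) (hi : i ∈ S) : t i * (a i / t i) ≤ a i := by
      rw [mul_comm]
      exact mul_le_of_le_div₀ (ha i hi) (ht i hi) le_rfl
    have amgm := calc
      (∏ i ∈ S, (a i / t i) ^ t i) ^ (∑ i ∈ S, t i)⁻¹
        ≤ (∑ i ∈ S, t i * (a i / t i)) / ∑ i ∈ S, t i :=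
          Real.geom_mean_le_arith_mean S t _ ht hpos hquot
      _ ≤ (∑ i ∈ S, a i) / ∑ i ∈ S, t i := by gcongr with i hi; exact hcancel i hi
    exact (Real.rpow_inv_le_iff_of_pos (prod_nonneg fun i hi => Real.rpow_nonneg (hquot i hi) _)
      (div_nonneg (sum_nonneg ha) hpos.le) hpos).1 amgm

lemma multinomialTerm_le_sum_rpow (ha : ∀ i ∈ S, 0 ≤ a i) (ht : ∀ i ∈ S, 0 ≤ t i) :
    multinomialTerm S a t ≤ (∑ i ∈ S, a i) ^ ∑ i ∈ S, t i := by
  have hle := prod_div_rpow_le_sum_div_sum_rpow ha ht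
  rwa [prod_congr rfl fun i hi => Real.div_rpow (ha i hi) (ht i hi) _, prod_div_distrib,
    Real.div_rpow (sum_nonneg ha) (sum_nonneg ht), le_div_iff₀ (rpow_self_pos (sum_nonneg ht)),
    div_mul_eq_mul_div] at hle

lemma multinomialTerm_eq_sum_rpow_of_proportional {c : ℝ} (hc : 0 ≤ c)
    (ha : ∀ i ∈ S, 0 ≤ a i) (ht : ∀ i ∈ S, t i = c * a i) :
    multinomialTerm S a t = (∑ i ∈ S, a i) ^ ∑ i ∈ S, t i := by
  have ht_nonneg (i) (hi : i ∈ S) : 0 ≤ t i := ht i hi ▸ mul_nonneg hc (ha i hi)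
  have hprod : ∏ i ∈ S, t i ^ t i = c ^ (∑ i ∈ S, t i) * ∏ i ∈ S, a i ^ t i := by
    rw [Real.rpow_sum_of_nonneg hc ht_nonneg, ← prod_mul_distrib]
    refine prod_congr rfl fun i hi => ?_
    rw [← Real.mul_rpow hc (ha i hi), ← ht i hi]
  have hsum : (∑ i ∈ S, t i) ^ (∑ i ∈ S, t i) =
      c ^ (∑ i ∈ S, t i) * (∑ i ∈ S, a i) ^ ∑ i ∈ S, t i := by
    rw [← Real.mul_rpow hc (sum_nonneg ha), mul_sum, ← sum_congr rfl ht]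
  rw [multinomialTerm, div_eq_iff (prod_pos fun i hi => rpow_self_pos (ht_nonneg i hi)).ne',
    hprod, hsum]
  ring

theorem stmt10_general {s : ℝ} {tmax : ι → ℝ} (ha : ∀ i ∈ S, 0 ≤ a i) (hA : 0 < ∑ i ∈ S, a i)
    (hs : 0 ≤ s) (htmax : ∀ i ∈ S, tmax i = a i * s / ∑ j ∈ S, a j) :
    (∀ t : ι → ℝ, (∀ i ∈ S, 0 ≤ t i) → ∑ i ∈ S, t i = s →
      multinomialTerm S a t ≤ (∑ i ∈ S, a i) ^ s) ∧
    multinomialTerm S a tmax = (∑ i ∈ S, a i) ^ s ∧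
    (∀ i ∈ S, 0 ≤ tmax i) ∧ ∑ i ∈ S, tmax i = s := by
  have hsum : ∑ i ∈ S, tmax i = s := by
    rw [sum_congr rfl htmax, ← sum_div, ← sum_mul, mul_div_cancel_left₀ _ hA.ne']
  refine ⟨fun t ht h => h ▸ multinomialTerm_le_sum_rpow ha ht, ?_,
    fun i hi => htmax i hi ▸ div_nonneg (mul_nonneg (ha i hi) hs) hA.le, hsum⟩
  rw [multinomialTerm_eq_sum_rpow_of_proportional (div_nonneg hs hA.le) ha
    fun i hi => by rw [htmax i hi, mul_comm, mul_div_right_comm], hsum]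

end MultinomialTerm

lemma multinomialTerm_pair (a b s t : ℝ) :
    multinomialTerm univ ![a, b] ![t, s - t] =
      a ^ t * b ^ (s - t) * s ^ s / (t ^ t * (s - t) ^ (s - t)) := by
  simp [multinomialTerm]

lemma sub_mul_div_add {a b : ℝ} (hab : a + b ≠ 0) (s : ℝ) :
    s - a * s / (a + b) = b * s / (a + b) := by
  field_simp
  ring

/-- For reals `a, b, s > 0` and `ψ(x) = x^x` (real power, with
`ψ(0)=0^0=1`), the supremum over `t ∈ [0,s]` of
`a^t · b^{s−t} · ψ(s)/(ψ(t)·ψ(s−t))` equals `(a+b)^s`, attained at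
`t* = a·s/(a+b)`. -/
theorem stmt10 (a b s : ℝ) (ha : 0 < a) (hb : 0 < b) (hs : 0 < s) :
    (∀ t ∈ Set.Icc (0 : ℝ) s,
        a ^ t * b ^ (s - t) * (s ^ s) / (t ^ t * (s - t) ^ (s - t)) ≤ (a + b) ^ s) ∧
    a ^ (a * s / (a + b)) * b ^ (s - a * s / (a + b)) * (s ^ s) /
        ((a * s / (a + b)) ^ (a * s / (a + b)) *
          (s - a * s / (a + b)) ^ (s - a * s / (a + b))) = (a + b) ^ s ∧
    a * s / (a + b) ∈ Set.Icc (0 : ℝ) s := by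
  obtain ⟨hle, heq, hnonneg, -⟩ := stmt10_general (S := univ) (a := ![a, b])
    (tmax := ![a * s / (a + b), s - a * s / (a + b)]) (by simp [ha.le, hb.le])
    (by simpa using add_pos ha hb) hs.le (by simp [sub_mul_div_add (add_pos ha hb).ne'])
  exact ⟨fun t ht => by simpa [multinomialTerm_pair] using hle ![t, s - t] (by simpa using ht),
    by simpa [multinomialTerm_pair] using heq, by simpa using hnonneg⟩
end

section
/- Let P, q ∈ (0,1) be reals, let α₃, α₆ ≥ 0 and γ₁, γ₂ ≥ 0 with γ := γ₁+γ₂ > 0, and set ᾱ = α₃+α₆+γ₁+γ₂. Define ψ(x)=x^x for x>0 with ψ(0)=1, and for α' ∈ [α₃, ᾱ−α₆] define β(α') = P^{α'} · q^{ᾱ−α'} · ψ(γ₁+γ₂) / ( ψ(α'−α₃) · ψ(ᾱ−α₆−α') ). Let α* = α₃ + (P/(P+q))·γ. Then: (i) β is nondecreasing on [α₃, α*] and nonincreasing on [α*, ᾱ−α₆]; (ii) β(α*) = P^{α₃} · q^{α₆} · (P+q)^{γ}; (iii) for every α₀ ∈ [α₃, ᾱ−α₆], the supremum of β over [α₀,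 ᾱ−α₆] equals β(α*) if α* ≥ α₀, and equals β(α₀) otherwise. -/
/-!
Write `x = α' - α₃` and `γ = γ₁ + γ₂`. Up to the constant factor `P ^ α₃ * q ^ α₆`, the function
`β` is the exponential of `x log P + (γ - x) log q` plus the entropy of splitting a mass `γ` into
`x` and `γ - x`. The derivative of this exponent is `log (P (γ - x)) - log (q x)`, which is
nonnegative exactly up to the point where `x : γ - x = P : q`. There the logarithms of the two
proportions cancel against `log P` and `log q`, which leaves `γ log (P + q)`.
-/

open Real Set

theorem isGreatest_image_Icc_of_monotoneOn_antitoneOn {α β : Type*} [LinearOrder α] [Preorder β]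
    {f : α → β} {a b c s : α} (hmono : MonotoneOn f (Icc a s)) (hanti : AntitoneOn f (Icc s b))
    (hsb : s ≤ b) (hc : c ∈ Icc a b) :
    IsGreatest (f '' Icc c b) (if c ≤ s then f s else f c) := by
  split_ifs with hcs
  · exact ⟨mem_image_of_mem f ⟨hcs, hsb⟩, forall_mem_image.2 <|
      isMaxOn_Icc_of_mono_anti (hmono.mono (Icc_subset_Icc_left hc.1)) hanti⟩
  · exact (hanti.mono (Icc_subset_Icc_left (not_le.1 hcs).le)).map_isLeast (isLeast_Icc hc.2)

theorem sub_div_add_mul {K : Type*} [Field K] {p q : K} (hpq : p + q ≠ 0) (c : K) :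
    c - p / (p + q) * c = q / (p + q) * c := by
  field_simp
  ring

theorem rpow_self_eq_exp_neg_negMulLog {x : ℝ} (hx : 0 ≤ x) : x ^ x = exp (-negMulLog x) := by
  rcases hx.eq_or_lt with rfl | hx
  · simp
  · rw [rpow_def_of_pos hx, negMulLog, neg_mul, neg_neg, mul_comm]

/-- The exponent of the entropy approximation of the binomial term
`γ.choose x * P ^ x * q ^ (γ - x)`: the binomial coefficient is replaced by
`γ ^ γ / (x ^ x * (γ - x) ^ (γ - x))`, which makes sense for real `γ` and `x`. The powers `y ^ y`
enter through `negMulLog y = -y * log y`, whose value `0` at `y = 0` agrees with `0 ^ 0 = 1`. -/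
noncomputable def binomialExponent (P q γ x : ℝ) : ℝ :=
  x * log P + (γ - x) * log q + (negMulLog x + negMulLog (γ - x) - negMulLog γ)

theorem exp_binomialExponent {P q γ x : ℝ} (hP : 0 < P) (hq : 0 < q) (hx : x ∈ Icc 0 γ) :
    exp (binomialExponent P q γ x) =
      P ^ x * q ^ (γ - x) * γ ^ γ / (x ^ x * (γ - x) ^ (γ - x)) := by
  rw [rpow_self_eq_exp_neg_negMulLog (hx.1.trans hx.2), rpow_self_eq_exp_neg_negMulLog hx.1,
    rpow_self_eq_exp_neg_negMulLog (sub_nonneg.2 hx.2), rpow_def_of_pos hP, rpow_def_of_pos hq,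
    ← exp_add, ← exp_add, ← exp_add, ← exp_sub, binomialExponent]
  ring_nf

theorem binomialExponent_sub_left (P q γ x : ℝ) :
    binomialExponent P q γ (γ - x) = binomialExponent q P γ x := by
  rw [binomialExponent, binomialExponent, sub_sub_cancel]
  ring

theorem continuous_binomialExponent (P q γ : ℝ) : Continuous (binomialExponent P q γ) := by
  unfold binomialExponent
  fun_prop

theorem hasDerivAt_binomialExponent (P q : ℝ) {γ x : ℝ} (hx : x ≠ 0) (hxγ : γ - x ≠ 0) :
    HasDerivAt (binomialExponent P q γ) (log P + log (γ - x) - (log q + log x)) x := by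
  have hsub : HasDerivAt (fun y => γ - y) (-1) x := (hasDerivAt_id x).const_sub γ
  have hlinear := ((hasDerivAt_id x).mul_const (log P)).add (hsub.mul_const (log q))
  have hentropy := ((hasDerivAt_negMulLog hx).add
    ((hasDerivAt_negMulLog hxγ).comp x hsub)).sub_const (negMulLog γ)
  refine (hlinear.add hentropy).congr_deriv ?_
  ring

theorem monotoneOn_binomialExponent {P q : ℝ} (hP : 0 < P) (hq : 0 < q) (γ : ℝ) :
    MonotoneOn (binomialExponent P q γ) (Icc 0 (P / (P + q) * γ)) := by
  have hbalance : ∀ x < P / (P + q) * γ, q * x < P * (γ - x) := by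
    intro x hx
    rw [div_mul_eq_mul_div, lt_div_iff₀ (add_pos hP hq)] at hx
    linarith
  have hright : ∀ x ∈ Ioo 0 (P / (P + q) * γ), 0 < γ - x := fun x hx =>
    pos_of_mul_pos_right ((mul_pos hq hx.1).trans (hbalance x hx.2)) hP.le
  refine monotoneOn_of_hasDerivWithinAt_nonneg (convex_Icc _ _)
    (continuous_binomialExponent P q γ).continuousOn (fun x hx => ?_) (fun x hx => ?_)
    (f' := fun x => log P + log (γ - x) - (log q + log x))
  · rw [interior_Icc] at hx
    exact (hasDerivAt_binomialExponent P q hx.1.ne' (hright x hx).ne').hasDerivWithinAt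
  · rw [interior_Icc] at hx
    rw [sub_nonneg, ← log_mul hq.ne' hx.1.ne', ← log_mul hP.ne' (hright x hx).ne']
    exact log_le_log (mul_pos hq hx.1) (hbalance x hx.2).le

theorem antitoneOn_binomialExponent {P q : ℝ} (hP : 0 < P) (hq : 0 < q) (γ : ℝ) :
    AntitoneOn (binomialExponent P q γ) (Icc (P / (P + q) * γ) γ) := by
  have hreflect : MapsTo (fun x => γ - x) (Icc (P / (P + q) * γ) γ) (Icc 0 (q / (q + P) * γ)) := by
    intro x hx
    rw [add_comm q P, ← sub_div_add_mul (add_pos hP hq).ne']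
    exact ⟨sub_nonneg.2 hx.2, sub_le_sub_left hx.1 γ⟩
  intro x hx y hy hxy
  rw [← binomialExponent_sub_left q P, ← binomialExponent_sub_left q P]
  exact monotoneOn_binomialExponent hq hP γ (hreflect hy) (hreflect hx) (sub_le_sub_left hxy γ)

theorem binomialExponent_div_add_mul {P q : ℝ} (hP : 0 < P) (hq : 0 < q) (γ : ℝ) :
    binomialExponent P q γ (P / (P + q) * γ) = γ * log (P + q) := by
  have hPq : 0 < P + q := add_pos hP hq
  have hsum : P / (P + q) + q / (P + q) = 1 := by rw [← add_div, div_self hPq.ne']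
  rw [binomialExponent, sub_div_add_mul hPq.ne', negMulLog_mul, negMulLog_mul]
  simp only [negMulLog, log_div hP.ne' hPq.ne', log_div hq.ne' hPq.ne']
  linear_combination (γ * log (P + q) - γ * log γ) * hsum

theorem rpow_mul_rpow_div_eq_mul_exp_binomialExponent {P q a b γ t : ℝ} (hP : 0 < P) (hq : 0 < q)
    (ht : t ∈ Icc a (a + γ)) :
    P ^ t * q ^ (a + b + γ - t) * γ ^ γ /
        ((t - a) ^ (t - a) * (a + b + γ - b - t) ^ (a + b + γ - b - t)) =
      P ^ a * q ^ b * exp (binomialExponent P q γ (t - a)) := by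
  have hP_pow : P ^ t = P ^ a * P ^ (t - a) := by rw [← rpow_add hP, add_sub_cancel]
  have hq_pow : q ^ (a + b + γ - t) = q ^ b * q ^ (γ - (t - a)) := by
    rw [← rpow_add hq]
    congr 1
    ring
  have hcell : a + b + γ - b - t = γ - (t - a) := by ring
  rw [exp_binomialExponent hP hq ⟨sub_nonneg.2 ht.1, sub_le_iff_le_add'.2 ht.2⟩,
    hP_pow, hq_pow, hcell]
  ring

theorem stmt13_general {P q γ : ℝ} (hP : 0 < P) (hq : 0 < q) (α₃ α₆ : ℝ) (hγ : 0 ≤ γ) :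
    let ᾱ := α₃ + α₆ + γ
    let β := fun t : ℝ => P ^ t * q ^ (ᾱ - t) * γ ^ γ /
      ((t - α₃) ^ (t - α₃) * (ᾱ - α₆ - t) ^ (ᾱ - α₆ - t))
    let s := α₃ + P / (P + q) * γ
    (MonotoneOn β (Icc α₃ s) ∧ AntitoneOn β (Icc s (ᾱ - α₆))) ∧
      β s = P ^ α₃ * q ^ α₆ * (P + q) ^ γ ∧
      ∀ c ∈ Icc α₃ (ᾱ - α₆),
        IsGreatest (β '' Icc c (ᾱ - α₆)) (if c ≤ s then β s else β c) := by
  intro ᾱ β s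
  have hPq : 0 < P + q := add_pos hP hq
  have hend : ᾱ - α₆ = α₃ + γ := by ring
  have hleft : α₃ ≤ s := le_add_of_nonneg_right (by positivity)
  have hright : s ≤ α₃ + γ := by
    rw [add_le_add_iff_left, ← sub_nonneg, sub_div_add_mul hPq.ne']
    positivity
  have hβ : EqOn (fun t => P ^ α₃ * q ^ α₆ * exp (binomialExponent P q γ (t - α₃))) β
      (Icc α₃ (α₃ + γ)) :=
    fun t ht => (rpow_mul_rpow_div_eq_mul_exp_binomialExponent hP hq ht).symm
  have hscale : Monotone fun y => P ^ α₃ * q ^ α₆ * exp y :=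
    exp_monotone.const_mul (by positivity)
  have hshift : Monotone fun t => t - α₃ := fun _ _ h => sub_le_sub_right h α₃
  have hmono : MonotoneOn β (Icc α₃ s) :=
    (hscale.comp_monotoneOn <| (monotoneOn_binomialExponent hP hq γ).comp (hshift.monotoneOn _)
      fun _ ht => ⟨sub_nonneg.2 ht.1, sub_le_iff_le_add'.2 ht.2⟩).congr
        (hβ.mono (Icc_subset_Icc_right hright))
  have hanti : AntitoneOn β (Icc s (α₃ + γ)) :=
    (hscale.comp_antitoneOn <| (antitoneOn_binomialExponent hP hq γ).comp_MonotoneOn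
      (hshift.monotoneOn _)
      fun _ ht => ⟨le_sub_iff_add_le'.2 ht.1, sub_le_iff_le_add'.2 ht.2⟩).congr
        (hβ.mono (Icc_subset_Icc_left hleft))
  rw [hend]
  refine ⟨⟨hmono, hanti⟩, ?_, fun c hc =>
    isGreatest_image_Icc_of_monotoneOn_antitoneOn hmono hanti hright hc⟩
  calc
    β s = P ^ α₃ * q ^ α₆ * exp (binomialExponent P q γ (s - α₃)) := (hβ ⟨hleft, hright⟩).symm
    _ = P ^ α₃ * q ^ α₆ * exp (log (P + q) * γ) := by
      rw [add_sub_cancel_left, binomialExponent_div_add_mul hP hq, mul_comm γ]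
    _ = P ^ α₃ * q ^ α₆ * (P + q) ^ γ := by rw [rpow_def_of_pos hPq]

/-- Let `P, q ∈ (0,1)`, `α₃, α₆ ≥ 0`, `γ₁, γ₂ ≥ 0` with
`γ = γ₁+γ₂ > 0`, `ᾱ = α₃+α₆+γ₁+γ₂`, `ψ(x)=x^x` (real power, `ψ(0)=1`), and
for `α' ∈ [α₃, ᾱ−α₆]` let
`β(α') = P^{α'} q^{ᾱ−α'} ψ(γ₁+γ₂)/(ψ(α'−α₃) ψ(ᾱ−α₆−α'))`, and
`α* = α₃ + (P/(P+q))·γ`. Then (i) `β` is nondecreasing on `[α₃, α*]` and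
nonincreasing on `[α*, ᾱ−α₆]`; (ii) `β(α*) = P^{α₃} q^{α₆} (P+q)^γ`;
(iii) for `α₀ ∈ [α₃, ᾱ−α₆]`, the supremum of `β` on `[α₀, ᾱ−α₆]` is
`β(α*)` if `α* ≥ α₀` and `β(α₀)` otherwise. -/
theorem stmt13 (P q α₃ α₆ γ₁ γ₂ : ℝ) (hP : P ∈ Set.Ioo (0 : ℝ) 1)
    (hq : q ∈ Set.Ioo (0 : ℝ) 1) (h3 : 0 ≤ α₃) (h6 : 0 ≤ α₆)
    (hγ1 : 0 ≤ γ₁) (hγ2 : 0 ≤ γ₂) (hγ : 0 < γ₁ + γ₂) :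
    (fun (ψ : ℝ → ℝ) (ᾱ : ℝ) (β : ℝ → ℝ) (αs : ℝ) =>
        (MonotoneOn β (Set.Icc α₃ αs) ∧ AntitoneOn β (Set.Icc αs (ᾱ - α₆))) ∧
        β αs = P ^ α₃ * q ^ α₆ * (P + q) ^ (γ₁ + γ₂) ∧
        ∀ α₀ ∈ Set.Icc α₃ (ᾱ - α₆),
          IsGreatest (β '' Set.Icc α₀ (ᾱ - α₆)) (if α₀ ≤ αs then β αs else β α₀))
      (fun x => x ^ x)
      (α₃ + α₆ + γ₁ + γ₂)
      (fun α' =>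
        P ^ α' * q ^ (α₃ + α₆ + γ₁ + γ₂ - α') * ((γ₁ + γ₂) ^ (γ₁ + γ₂)) /
          ((α' - α₃) ^ (α' - α₃) *
            ((α₃ + α₆ + γ₁ + γ₂) - α₆ - α') ^ ((α₃ + α₆ + γ₁ + γ₂) - α₆ - α')))
      (α₃ + P / (P + q) * (γ₁ + γ₂)) := by
  simpa only [add_assoc] using stmt13_general hP.1 hq.1 α₃ α₆ hγ.le
end
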